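/- arXiv:math/0101123 — 2 statements merged into one kernel-verified Lean document; each statement's English description precedes it below -/
import Mathlib

section
/- Let Γ = ⟨g⟩ ≅ ℤ/nℤ act on K[X,Y] as described. Then the subalgebra of Γ-invariants K[X,Y]^Γ is equal to the K-subalgebra of K[X,Y] generated by X^n, XY and Y^n. -/
/-!
STATEMENT 0: Let `Γ = ⟨g⟩ ≅ ℤ/nℤ` act on `K[X,Y]` by `g·X = ζX`, `g·Y = ζ⁻¹Y`,
where `ζ` is a primitive `n`-th root of unity.  Then the subalgebra of `Γ`-invariants
of `K[X,Y]` equals the `K`-subalgebra generated by `X^n`, `XY` and `Y^n`.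

We model `K[X,Y]` as `MvPolynomial (Fin 2) K` and the generator `g` of `Γ` as the
`K`-algebra endomorphism `φ` sending `X ↦ ζX`, `Y ↦ ζ⁻¹Y`; a polynomial is
`Γ`-invariant iff it is fixed by every power `φ^[m]` of `φ`.
-/

/-!
The endomorphism `φ` is diagonal in the monomial basis: it scales `X^i Y^j` by
`ζ^i * ζ⁻¹^j` (`coeff_diag`). Hence `p` is invariant iff every monomial `X^i Y^j` occurring in `p`
satisfies `ζ^i = ζ^j`, that is `i ≡ j [MOD n]`. Such a monomial is `(XY)^min(i,j)` times a power
of `X^n` or of `Y^n` (`monomial_mem`), so invariants lie in the generated subalgebra; conversely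
the three generators are visibly fixed by `φ`.
-/

open MvPolynomial in
lemma aeval_diag_monomial {K : Type} [Field K] (ζ a : K) (d : Fin 2 →₀ ℕ) :
    aeval ![C ζ * X 0, C ζ⁻¹ * X 1] (monomial d a) =
      (monomial d (ζ ^ d 0 * ζ⁻¹ ^ d 1 * a) : MvPolynomial (Fin 2) K) := by
  rw [aeval_monomial, monomial_eq, Finsupp.prod_fintype _ _ (by simp),
    Finsupp.prod_fintype _ _ (by simp)]
  simp only [Fin.prod_univ_two, Matrix.cons_val_zero, Matrix.cons_val_one, mul_pow, map_mul,
    map_pow, algebraMap_eq]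
  ring

open MvPolynomial in
lemma coeff_diag {K : Type} [Field K] (ζ : K) (p : MvPolynomial (Fin 2) K) (d : Fin 2 →₀ ℕ) :
    coeff d (aeval ![C ζ * X 0, C ζ⁻¹ * X 1] p : MvPolynomial (Fin 2) K) =
      ζ ^ d 0 * ζ⁻¹ ^ d 1 * coeff d p := by
  induction p using MvPolynomial.induction_on' with
  | monomial e a =>
    rw [aeval_diag_monomial, coeff_monomial, coeff_monomial]
    split_ifs with h
    · rw [h]
    · rw [mul_zero]
  | add p q hp hq => rw [map_add, coeff_add, coeff_add, hp, hq, mul_add]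

open MvPolynomial in
lemma monomial_mem {K : Type} [Field K] {n : ℕ} (d : Fin 2 →₀ ℕ) (a : K)
    (h : d 0 ≡ d 1 [MOD n]) :
    monomial d a ∈ Algebra.adjoin K
      ({X 0 ^ n, X 0 * X 1, X 1 ^ n} : Set (MvPolynomial (Fin 2) K)) := by
  have hX := Algebra.subset_adjoin (R := K)
    (s := ({X 0 ^ n, X 0 * X 1, X 1 ^ n} : Set (MvPolynomial (Fin 2) K)))
  rw [monomial_eq, Finsupp.prod_fintype _ _ (by simp), Fin.prod_univ_two]
  refine mul_mem (Subalgebra.algebraMap_mem _ a) ?_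
  rcases le_total (d 0) (d 1) with hle | hle
  · obtain ⟨k, hk⟩ := (Nat.modEq_iff_dvd' hle).1 h
    have e : (X 0 ^ d 0 * X 1 ^ d 1 : MvPolynomial (Fin 2) K) =
        (X 0 * X 1) ^ d 0 * (X 1 ^ n) ^ k := by
      rw [← pow_mul, ← hk, mul_pow, mul_assoc, ← pow_add, Nat.add_sub_cancel' hle]
    rw [e]
    exact mul_mem (pow_mem (hX (by simp)) _) (pow_mem (hX (by simp)) _)
  · obtain ⟨k, hk⟩ := (Nat.modEq_iff_dvd' hle).1 h.symm
    have e : (X 0 ^ d 0 * X 1 ^ d 1 : MvPolynomial (Fin 2) K) =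
        (X 0 ^ n) ^ k * (X 0 * X 1) ^ d 1 := by
      rw [← pow_mul, ← hk, mul_pow, ← mul_assoc, ← pow_add, Nat.sub_add_cancel hle]
    rw [e]
    exact mul_mem (pow_mem (hX (by simp)) _) (pow_mem (hX (by simp)) _)

noncomputable section

theorem statement_0 (K : Type) [Field K] (n : ℕ) (hn : 0 < n)
    (ζ : K) (hζ : IsPrimitiveRoot ζ n)
    (φ : MvPolynomial (Fin 2) K →ₐ[K] MvPolynomial (Fin 2) K)
    (hφ : φ = MvPolynomial.aeval
        ![MvPolynomial.C ζ * MvPolynomial.X 0, MvPolynomial.C ζ⁻¹ * MvPolynomial.X 1]) :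
    ∀ p : MvPolynomial (Fin 2) K,
      (∀ m : ℕ, (⇑φ)^[m] p = p) ↔
        p ∈ Algebra.adjoin K
          ({MvPolynomial.X 0 ^ n, MvPolynomial.X 0 * MvPolynomial.X 1,
            MvPolynomial.X 1 ^ n} : Set (MvPolynomial (Fin 2) K)) := by
  intro p
  have hζ0 : ζ ≠ 0 := hζ.ne_zero hn.ne'
  constructor
  · intro h
    have h1 : φ p = p := h 1
    rw [p.as_sum]
    refine sum_mem fun d hd => monomial_mem d _ ?_
    have hc := coeff_diag ζ p d
    rw [← hφ, h1] at hc
    have hscale : ζ ^ d 0 * ζ⁻¹ ^ d 1 = 1 :=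
      (mul_eq_right₀ (MvPolynomial.mem_support_iff.1 hd)).1 hc.symm
    rw [inv_pow, mul_inv_eq_one₀ (pow_ne_zero _ hζ0)] at hscale
    rw [hζ.eq_orderOf]
    exact (isOfFinOrder_iff_pow_eq_one.2 ⟨n, hn, hζ.pow_eq_one⟩).pow_eq_pow_iff_modEq.1 hscale
  · intro h m
    refine Function.iterate_fixed ?_ m
    -- The fixed points of `φ` form a subalgebra, so only the generators need checking.
    have hle : Algebra.adjoin K
        ({MvPolynomial.X 0 ^ n, MvPolynomial.X 0 * MvPolynomial.X 1,
          MvPolynomial.X 1 ^ n} : Set (MvPolynomial (Fin 2) K)) ≤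
        AlgHom.equalizer φ (AlgHom.id K _) := by
      have hX : φ (MvPolynomial.X 0) = MvPolynomial.C ζ * MvPolynomial.X 0 := by simp [hφ]
      have hY : φ (MvPolynomial.X 1) = MvPolynomial.C ζ⁻¹ * MvPolynomial.X 1 := by simp [hφ]
      rw [Algebra.adjoin_le_iff]
      rintro q (rfl | rfl | rfl) <;>
        rw [SetLike.mem_coe, AlgHom.mem_equalizer, AlgHom.id_apply]
      · rw [map_pow, hX, mul_pow, ← map_pow, hζ.pow_eq_one, map_one, one_mul]
      · rw [map_mul, hX, hY, mul_mul_mul_comm, ← map_mul, mul_inv_cancel₀ hζ0, map_one, one_mul]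
      · rw [map_pow, hY, mul_pow, ← map_pow, hζ.inv.pow_eq_one, map_one, one_mul]
    exact hle h
end
end

section
/- The K-algebra K[A,B,H]/(AB − H^n) is isomorphic to the K-subalgebra of K[X,Y] generated by X^n, XY and Y^n, via the map sending A ↦ X^n, B ↦ Y^n and H ↦ XY. -/
/-!
Let `φ : K[A,B,H] → K[X,Y]` send `A ↦ X^n`, `B ↦ Y^n`, `H ↦ XY`. Its range is the subalgebra
generated by these three elements, so everything comes down to `ker φ = (AB - H^n)`.
The inclusion `⊇` is `X^n Y^n = (XY)^n`. For `⊆`, there is a `K`-linear map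
`L : K[X,Y] → K[A,B,H]/(AB - H^n)` with `L (φ p) = [p]` for all `p` (`kleinianRetract_apply_hom`).
It is given on monomials by
`X^i Y^j ↦ H^(min i j) A^((i-j)/n) B^((j-i)/n)` with truncated subtraction; on the image of the
monomial `A^a B^b H^h` this is the normal form obtained by rewriting `AB` to `H^n`.
-/

noncomputable section

open MvPolynomial in
/-- The ideal `(AB - H^n)` of `K[A,B,H]`. -/
abbrev kleinianIdeal (K : Type) [Field K] (n : ℕ) : Ideal (MvPolynomial (Fin 3) K) :=
  Ideal.span {X 0 * X 1 - X 2 ^ n}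

open MvPolynomial in
/-- The homomorphism `K[A,B,H] → K[X,Y]` with `A ↦ X^n`, `B ↦ Y^n`, `H ↦ XY`. -/
def kleinianHom (K : Type) [Field K] (n : ℕ) :
    MvPolynomial (Fin 3) K →ₐ[K] MvPolynomial (Fin 2) K :=
  aeval ![X 0 ^ n, X 1 ^ n, X 0 * X 1]

open MvPolynomial in
/-- The `K`-linear map `K[X,Y] → K[A,B,H]/(AB - H^n)` sending `X^i Y^j` to
`H^(min i j) A^((i-j)/n) B^((j-i)/n)`. Only its values on monomials with `i ≡ j` mod `n` are
meaningful; on the others the rounding of the division is irrelevant. -/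
def kleinianRetract (K : Type) [Field K] (n : ℕ) :
    MvPolynomial (Fin 2) K →ₗ[K] (MvPolynomial (Fin 3) K ⧸ kleinianIdeal K n) :=
  (basisMonomials (Fin 2) K).constr K fun d =>
    Ideal.Quotient.mk _ (X 2 ^ min (d 0) (d 1) * X 0 ^ ((d 0 - d 1) / n) *
      X 1 ^ ((d 1 - d 0) / n))

open MvPolynomial in
lemma kleinian_relation (K : Type) [Field K] (n : ℕ) :
    Ideal.Quotient.mk (kleinianIdeal K n) (X 0) * Ideal.Quotient.mk (kleinianIdeal K n) (X 1) =
      Ideal.Quotient.mk (kleinianIdeal K n) (X 2) ^ n := by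
  rw [← map_mul, ← map_pow, Ideal.Quotient.eq]
  exact Ideal.subset_span rfl

open MvPolynomial in
lemma kleinianHom_monomial (K : Type) [Field K] (n : ℕ) (d : Fin 3 →₀ ℕ) :
    kleinianHom K n (monomial d 1) =
      monomial (Finsupp.single 0 (n * d 0 + d 2) + Finsupp.single 1 (n * d 1 + d 2)) 1 := by
  have h : ∀ i j : ℕ, (monomial (Finsupp.single 0 i + Finsupp.single 1 j) 1 :
      MvPolynomial (Fin 2) K) = X 0 ^ i * X 1 ^ j := by
    intro i j
    simp [X_pow_eq_monomial, monomial_mul]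
  rw [h, kleinianHom, aeval_monomial, Finsupp.prod_fintype _ _ (by simp)]
  simp [Fin.prod_univ_three]
  ring

open MvPolynomial in
lemma kleinianRetract_apply_hom (K : Type) [Field K] (n : ℕ) (hn : 0 < n)
    (p : MvPolynomial (Fin 3) K) :
    kleinianRetract K n (kleinianHom K n p) = Ideal.Quotient.mk (kleinianIdeal K n) p := by
  suffices h : kleinianRetract K n ∘ₗ (kleinianHom K n).toLinearMap =
      (Ideal.Quotient.mkₐ K (kleinianIdeal K n)).toLinearMap from LinearMap.congr_fun h p
  refine (basisMonomials (Fin 3) K).ext fun d => ?_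
  have hd : (monomial d 1 : MvPolynomial (Fin 3) K) = X 0 ^ d 0 * X 1 ^ d 1 * X 2 ^ d 2 := by
    rw [monomial_eq, Finsupp.prod_fintype _ _ (by simp)]
    simp [Fin.prod_univ_three]
  have hL : ∀ e : Fin 2 →₀ ℕ, kleinianRetract K n (monomial e 1) =
      Ideal.Quotient.mk _ (X 2 ^ min (e 0) (e 1) * X 0 ^ ((e 0 - e 1) / n) *
      X 1 ^ ((e 1 - e 0) / n)) := by
    intro e
    have := (basisMonomials (Fin 2) K).constr_basis K (fun d : Fin 2 →₀ ℕ =>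
      Ideal.Quotient.mk (kleinianIdeal K n) (X 2 ^ min (d 0) (d 1) * X 0 ^ ((d 0 - d 1) / n) *
      X 1 ^ ((d 1 - d 0) / n))) e
    rwa [coe_basisMonomials] at this
  have hrel := kleinian_relation K n
  simp only [coe_basisMonomials, LinearMap.comp_apply, AlgHom.toLinearMap_apply,
    Ideal.Quotient.mkₐ_eq_mk]
  rw [kleinianHom_monomial, hL, hd]
  simp only [Finsupp.add_apply, Finsupp.single_apply, map_mul, map_pow]
  simp only [if_true, one_ne_zero, zero_ne_one, if_false, add_zero, zero_add,
    Nat.add_sub_add_right, ← Nat.mul_sub, Nat.mul_div_cancel_left _ hn]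
  generalize Ideal.Quotient.mk (kleinianIdeal K n) (X 0) = a at *
  generalize Ideal.Quotient.mk (kleinianIdeal K n) (X 1) = b at *
  generalize Ideal.Quotient.mk (kleinianIdeal K n) (X 2) = c at *
  rcases le_total (d 1) (d 0) with h | h
  · obtain ⟨k, hk⟩ := Nat.exists_eq_add_of_le h
    rw [min_eq_right (by gcongr), Nat.sub_eq_zero_of_le h, hk, Nat.add_sub_cancel_left,
      pow_add c, pow_mul, ← hrel]
    ring
  · obtain ⟨k, hk⟩ := Nat.exists_eq_add_of_le h
    rw [min_eq_left (by gcongr), Nat.sub_eq_zero_of_le h, hk, Nat.add_sub_cancel_left,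
      pow_add c, pow_mul, ← hrel]
    ring

open MvPolynomial in
lemma kleinianIdeal_eq_ker (K : Type) [Field K] (n : ℕ) (hn : 0 < n) :
    kleinianIdeal K n = RingHom.ker (kleinianHom K n) := by
  apply le_antisymm
  · rw [Ideal.span_singleton_le_iff_mem, RingHom.mem_ker]
    simp [kleinianHom, mul_pow]
  · intro p hp
    rw [RingHom.mem_ker] at hp
    rw [← Ideal.Quotient.eq_zero_iff_mem, ← kleinianRetract_apply_hom K n hn, hp, map_zero]

open MvPolynomial in
lemma kleinianHom_range (K : Type) [Field K] (n : ℕ) :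
    (kleinianHom K n).range = Algebra.adjoin K ({X 0 ^ n, X 0 * X 1, X 1 ^ n} :
      Set (MvPolynomial (Fin 2) K)) := by
  rw [kleinianHom, ← Algebra.adjoin_range_eq_range_aeval]
  congr 1
  ext x
  simp
  tauto

theorem statement_1 (K : Type) [Field K] (n : ℕ) (hn : 0 < n) :
    ∃ e : (MvPolynomial (Fin 3) K ⧸
        (Ideal.span {MvPolynomial.X 0 * MvPolynomial.X 1 - MvPolynomial.X 2 ^ n} :
          Ideal (MvPolynomial (Fin 3) K))) ≃ₐ[K]
        (Algebra.adjoin K ({MvPolynomial.X 0 ^ n, MvPolynomial.X 0 * MvPolynomial.X 1,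
          MvPolynomial.X 1 ^ n} : Set (MvPolynomial (Fin 2) K))),
      ((e (Ideal.Quotient.mk
          (Ideal.span {MvPolynomial.X 0 * MvPolynomial.X 1 - MvPolynomial.X 2 ^ n})
          (MvPolynomial.X 0)) : MvPolynomial (Fin 2) K) = MvPolynomial.X 0 ^ n) ∧
      ((e (Ideal.Quotient.mk
          (Ideal.span {MvPolynomial.X 0 * MvPolynomial.X 1 - MvPolynomial.X 2 ^ n})
          (MvPolynomial.X 1)) : MvPolynomial (Fin 2) K) = MvPolynomial.X 1 ^ n) ∧
      ((e (Ideal.Quotient.mk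
          (Ideal.span {MvPolynomial.X 0 * MvPolynomial.X 1 - MvPolynomial.X 2 ^ n})
          (MvPolynomial.X 2)) : MvPolynomial (Fin 2) K) =
        MvPolynomial.X 0 * MvPolynomial.X 1) := by
  refine ⟨((Ideal.quotientEquivAlgOfEq K (kleinianIdeal_eq_ker K n hn)).trans
    (Ideal.quotientKerEquivRange (kleinianHom K n))).trans
    (Subalgebra.equivOfEq _ _ (kleinianHom_range K n)), ?_, ?_, ?_⟩
  · change kleinianHom K n (MvPolynomial.X 0) = _
    simp [kleinianHom]
  · change kleinianHom K n (MvPolynomial.X 1) = _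
    simp [kleinianHom]
  · change kleinianHom K n (MvPolynomial.X 2) = _
    simp [kleinianHom]
end
end
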